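/- Let L be a subgroup with ℤ⁴ ⊕ ℤ⁸ ⊆ L ⊆ (1/2)ℤ⁴ ⊕ (1/2)ℤ⁸ such that L is an even lattice for the form of K ⊕ E, the index [L : ℤ⁴ ⊕ ℤ⁸] equals 2, and L ∩ (ℚ⁴ ⊕ 0) = ℤ⁴ ⊕ 0, L ∩ (0 ⊕ ℚ⁸) = 0 ⊕ ℤ⁸. Then for every d = (d₁,d₂) ∈ L ∖ (ℤ⁴ ⊕ ℤ⁸) one has d₁ ∉ ℤ⁴, d₂ ∉ ℤ⁸, and ⟨d₁,d₁⟩ ≡ ⟨d₂,d₂⟩ (mod 2); moreover the residue of ⟨d₁,d₁⟩ modulo 2 is the same for all such d. (This is the well-definedness of the parity of a fixed-point-free involution.) -/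

import Mathlib

/-!
STATEMENT 4: Well-definedness of the parity of a fixed-point-free involution.
If `ℤ⁴ ⊕ ℤ⁸ ⊆ L ⊆ (1/2)ℤ⁴ ⊕ (1/2)ℤ⁸` is a subgroup which is even for the
form of `K ⊕ E`, of index 2 over `ℤ⁴ ⊕ ℤ⁸`, and meeting `ℚ⁴ ⊕ 0` and
`0 ⊕ ℚ⁸` exactly in `ℤ⁴ ⊕ 0` and `0 ⊕ ℤ⁸`, then every
`d = (d₁,d₂) ∈ L ∖ (ℤ⁴ ⊕ ℤ⁸)` has `d₁ ∉ ℤ⁴`, `d₂ ∉ ℤ⁸` and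
`⟨d₁,d₁⟩ ≡ ⟨d₂,d₂⟩ (mod 2)`, and the residue of `⟨d₁,d₁⟩ mod 2` is the same
for all such `d`.
-/

noncomputable section
namespace Stmt4

/-- The bilinear form of K = U(2) ⊕ U(2) on ℚ⁴ (ℚ-bilinear extension):
Gram matrix has blocks [[0,2],[2,0]] and [[0,2],[2,0]]. -/
def bK (x y : Fin 4 → ℚ) : ℚ :=
  2 * (x 0 * y 1 + x 1 * y 0) + 2 * (x 2 * y 3 + x 3 * y 2)

/-- The bilinear form of E = E8(2) on ℚ⁸ (ℚ-bilinear extension):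
Gram matrix is −2 times the E8 Cartan matrix. -/
def bE (x y : Fin 8 → ℚ) : ℚ :=
  ∑ i : Fin 8, ∑ j : Fin 8, x i * ((-2 * CartanMatrix.E₈ i j : ℤ) : ℚ) * y j

/-- `x` lies in the lattice ℤ⁴ ⊂ ℚ⁴. -/
def isInt4 (x : Fin 4 → ℚ) : Prop := ∀ i, ∃ n : ℤ, x i = n

/-- `x` lies in the lattice ℤ⁸ ⊂ ℚ⁸. -/
def isInt8 (x : Fin 8 → ℚ) : Prop := ∀ i, ∃ n : ℤ, x i = n

/-- `x` lies in the dual lattice (1/2)ℤ⁴ ⊂ ℚ⁴ of K. -/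
def isHalf4 (x : Fin 4 → ℚ) : Prop := ∀ i, ∃ n : ℤ, x i = n / 2

/-- `x` lies in the dual lattice (1/2)ℤ⁸ ⊂ ℚ⁸ of E. -/
def isHalf8 (x : Fin 8 → ℚ) : Prop := ∀ i, ∃ n : ℤ, x i = n / 2

/-- The ambient space ℚ⁴ ⊕ ℚ⁸ of K ⊕ E. -/
abbrev V : Type := (Fin 4 → ℚ) × (Fin 8 → ℚ)

/-- The orthogonal direct sum form of K ⊕ E on ℚ⁴ ⊕ ℚ⁸. -/
def bV (x y : V) : ℚ := bK x.1 y.1 + bE x.2 y.2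

/-- Membership in the lattice Λ' = ℤ·(d₁,d₂) + (ℤ⁴ ⊕ ℤ⁸) ⊂ ℚ⁴ ⊕ ℚ⁸. -/
def memL (d₁ : Fin 4 → ℚ) (d₂ : Fin 8 → ℚ) (x : V) : Prop :=
  ∃ n : ℤ, isInt4 (x.1 - (n : ℚ) • d₁) ∧ isInt8 (x.2 - (n : ℚ) • d₂)

/-!
If `d₁` were integral, subtracting `(d₁, 0) ∈ L` from `d` would leave `(0, d₂) ∈ L`, forcing `d₂`,
and hence `d`, to be integral; symmetrically for `d₂`.

Both `K = (U ⊕ U)(2)` and `E = E8(2)` are of the form `Λ(2)` with `Λ` an even lattice. For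
`x ∈ (1/2)Λ` the norm in `Λ(2)` is half of the even norm of `2x` in `Λ`, hence an integer. So
`⟨d₁, d₁⟩ + ⟨d₂, d₂⟩ ∈ 2ℤ` may be rewritten as `⟨d₁, d₁⟩ - ⟨d₂, d₂⟩ ∈ 2ℤ`. Since `L` has index 2
over the integral vectors, two choices of `d₁` differ by some `v ∈ Λ`, and passing from `x` to
`x - v` changes the norm by `⟨v, v⟩ - 2⟨x, v⟩`, where `⟨v, v⟩` is even and `⟨x, v⟩` is an integer.
-/

section Subdirect

variable {G H : Type*} [AddGroup G] [AddGroup H] {L : AddSubgroup (G × H)}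
  {S : AddSubgroup G} {T : AddSubgroup H}

theorem snd_mem_of_fst_mem (hL : S.prod T ≤ L) (hT : ∀ x ∈ L, x.1 = 0 → x.2 ∈ T)
    {x : G × H} (hx : x ∈ L) (h : x.1 ∈ S) : x.2 ∈ T := by
  have hsub : x - (x.1, 0) ∈ L := L.sub_mem hx (hL ⟨h, T.zero_mem⟩)
  simpa using hT _ hsub (by simp)

theorem fst_mem_of_snd_mem (hL : S.prod T ≤ L) (hS : ∀ x ∈ L, x.2 = 0 → x.1 ∈ S)
    {x : G × H} (hx : x ∈ L) (h : x.2 ∈ T) : x.1 ∈ S := by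
  have hsub : x - (0, x.2) ∈ L := L.sub_mem hx (hL ⟨S.zero_mem, h⟩)
  simpa using hS _ hsub (by simp)

end Subdirect

theorem even_apply_self_of_mem_span {R M : Type*} [CommRing R] [AddCommGroup M] [Module R M]
    {B : LinearMap.BilinForm R M} (hB : B.IsSymm) {s : Set M} (hs : ∀ v ∈ s, Even (B v v))
    {x : M} (hx : x ∈ Submodule.span R s) : Even (B x x) := by
  induction hx using Submodule.span_induction with
  | mem v hv => exact hs v hv
  | zero => simp
  | add x y _ _ hx hy =>
    have hexpand : B (x + y) (x + y) = B x x + B y y + 2 * B x y := by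
      simp only [map_add, LinearMap.add_apply, hB.eq y x]
      ring
    exact hexpand ▸ (hx.add hy).add (even_two_mul _)
  | smul c x _ hx => simpa using (hx.mul_left c).mul_left c

section GramMatrix

variable {ι : Type*}

variable (ι) in
/-- The standard lattice `ℤ^ι` in `ℚ^ι`. -/
def integerLattice : AddSubgroup (ι → ℚ) :=
  ((Int.castAddHom ℚ).compLeft ι).range

theorem mem_integerLattice_iff {x : ι → ℚ} :
    x ∈ integerLattice ι ↔ ∀ i, ∃ n : ℤ, x i = n := by
  simp only [integerLattice, AddMonoidHom.mem_range, funext_iff, Classical.skolem]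
  exact exists_congr fun m => forall_congr' fun i => eq_comm

theorem two_smul_mem_integerLattice_iff {x : ι → ℚ} :
    (2 : ℚ) • x ∈ integerLattice ι ↔ ∀ i, ∃ n : ℤ, x i = n / 2 := by
  simp only [mem_integerLattice_iff, Pi.smul_apply, smul_eq_mul,
    eq_div_iff (two_ne_zero' ℚ), mul_comm (2 : ℚ)]

variable [Fintype ι] [DecidableEq ι] {A : Matrix ι ι ℤ}

theorem even_toBilin'_self (hA : A.IsSymm) (hdiag : ∀ i, Even (A i i)) (m : ι → ℤ) :
    Even (A.toBilin' m m) := by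
  refine even_apply_self_of_mem_span (Matrix.isSymm_toBilin'_iff_isSymm.mpr hA) ?_
    ((Pi.basisFun ℤ ι).mem_span m)
  rintro _ ⟨i, rfl⟩
  simpa using hdiag i

/-- The `ℚ`-bilinear extension of the form of `Λ(2)`, where `Λ` is `ℤ^ι` with Gram matrix `A`
and `Λ(2)` is `Λ` with its form multiplied by `2`. -/
def doubledForm (A : Matrix ι ι ℤ) : LinearMap.BilinForm ℚ (ι → ℚ) :=
  (2 : ℚ) • (A.map (Int.cast : ℤ → ℚ)).toBilin'

theorem doubledForm_apply (A : Matrix ι ι ℤ) (x y : ι → ℚ) :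
    doubledForm A x y = 2 * ∑ i, ∑ j, x i * A i j * y j := by
  simp [doubledForm, Matrix.toBilin'_apply]

theorem doubledForm_intCast (A : Matrix ι ι ℤ) (m n : ι → ℤ) :
    doubledForm A (fun i => (m i : ℚ)) (fun i => (n i : ℚ)) = 2 * (A.toBilin' m n : ℚ) := by
  simp [doubledForm_apply, Matrix.toBilin'_apply]

theorem doubledForm_isSymm (hA : A.IsSymm) : (doubledForm A).IsSymm :=
  (Matrix.isSymm_toBilin'_iff_isSymm.mpr (hA.map _)).smul 2

theorem exists_doubledForm_eq_two_mul (A : Matrix ι ι ℤ) {x y : ι → ℚ}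
    (hx : x ∈ integerLattice ι) (hy : y ∈ integerLattice ι) :
    ∃ k : ℤ, doubledForm A x y = 2 * k := by
  obtain ⟨m, rfl⟩ := hx
  obtain ⟨n, rfl⟩ := hy
  exact ⟨A.toBilin' m n, doubledForm_intCast A m n⟩

theorem exists_doubledForm_eq_intCast (A : Matrix ι ι ℤ) {x y : ι → ℚ}
    (hx : (2 : ℚ) • x ∈ integerLattice ι) (hy : y ∈ integerLattice ι) :
    ∃ k : ℤ, doubledForm A x y = k := by
  obtain ⟨k, hk⟩ := exists_doubledForm_eq_two_mul A hx hy
  rw [map_smul, LinearMap.smul_apply, smul_eq_mul] at hk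
  exact ⟨k, mul_left_cancel₀ two_ne_zero hk⟩

theorem exists_doubledForm_self_eq_intCast (hA : A.IsSymm) (hdiag : ∀ i, Even (A i i))
    {x : ι → ℚ} (hx : (2 : ℚ) • x ∈ integerLattice ι) :
    ∃ k : ℤ, doubledForm A x x = k := by
  obtain ⟨m, hm : (fun i => (m i : ℚ)) = (2 : ℚ) • x⟩ := hx
  obtain ⟨k, hk⟩ := even_toBilin'_self hA hdiag m
  have hnorm : 4 * doubledForm A x x = 2 * (A.toBilin' m m : ℚ) := by
    rw [← doubledForm_intCast, hm]
    simp only [map_smul, LinearMap.smul_apply, smul_eq_mul]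
    ring
  refine ⟨k, ?_⟩
  rw [hk] at hnorm
  push_cast at hnorm
  linarith

theorem exists_doubledForm_self_sub_eq_two_mul (hA : A.IsSymm) {x y : ι → ℚ}
    (hx : (2 : ℚ) • x ∈ integerLattice ι) (hxy : x - y ∈ integerLattice ι) :
    ∃ k : ℤ, doubledForm A x x - doubledForm A y y = 2 * k := by
  obtain ⟨k, hk⟩ := exists_doubledForm_eq_intCast A hx hxy
  obtain ⟨l, hl⟩ := exists_doubledForm_eq_two_mul A hxy hxy
  refine ⟨k - l, ?_⟩
  have hexpand : doubledForm A x x - doubledForm A y y =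
      2 * doubledForm A x (x - y) - doubledForm A (x - y) (x - y) := by
    simp only [map_sub, LinearMap.sub_apply, (doubledForm_isSymm hA).eq y x]
    ring
  rw [hexpand, hk, hl]
  push_cast
  ring

end GramMatrix

/-- The Gram matrix of `U ⊕ U`, so that `K = (U ⊕ U)(2)`. -/
def gramUU : Matrix (Fin 4) (Fin 4) ℤ :=
  !![0, 1, 0, 0;
     1, 0, 0, 0;
     0, 0, 0, 1;
     0, 0, 1, 0]

theorem gramUU_isSymm : gramUU.IsSymm := by
  decide

theorem bK_eq_doubledForm (x y : Fin 4 → ℚ) : bK x y = doubledForm gramUU x y := by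
  simp only [bK, doubledForm_apply, gramUU, Fin.sum_univ_four, Matrix.of_apply, Matrix.cons_val,
    Int.cast_zero, Int.cast_one]
  ring

theorem bE_eq_doubledForm (x y : Fin 8 → ℚ) :
    bE x y = doubledForm (-CartanMatrix.E₈) x y := by
  simp only [bE, doubledForm_apply, Finset.mul_sum, Matrix.neg_apply]
  refine Finset.sum_congr rfl fun i _ => Finset.sum_congr rfl fun j _ => ?_
  push_cast
  ring

theorem exists_bE_self_eq_intCast {x : Fin 8 → ℚ} (hx : isHalf8 x) : ∃ k : ℤ, bE x x = k := by
  simp only [bE_eq_doubledForm]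
  exact exists_doubledForm_self_eq_intCast CartanMatrix.E₈_isSymm.neg
    (fun i => by simp) (two_smul_mem_integerLattice_iff.mpr hx)

theorem exists_bK_self_sub_eq_two_mul {x y : Fin 4 → ℚ} (hx : isHalf4 x) (hxy : isInt4 (x - y)) :
    ∃ k : ℤ, bK x x - bK y y = 2 * k := by
  simp only [bK_eq_doubledForm]
  exact exists_doubledForm_self_sub_eq_two_mul gramUU_isSymm
    (two_smul_mem_integerLattice_iff.mpr hx) (mem_integerLattice_iff.mpr hxy)

theorem exists_bK_self_sub_bE_self_eq_two_mul {d : V} (hd : isHalf8 d.2)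
    (heven : ∃ k : ℤ, bV d d = 2 * k) : ∃ k : ℤ, bK d.1 d.1 - bE d.2 d.2 = 2 * k := by
  obtain ⟨k, hk⟩ := heven
  obtain ⟨l, hl⟩ := exists_bE_self_eq_intCast hd
  refine ⟨k - l, ?_⟩
  rw [bV] at hk
  push_cast
  linarith

theorem statement4 (L : AddSubgroup V)
    (hsub : ∀ x : V, isInt4 x.1 ∧ isInt8 x.2 → x ∈ L)
    (hhalf : ∀ x ∈ L, isHalf4 x.1 ∧ isHalf8 x.2)
    (heven : ∀ x ∈ L, ∃ k : ℤ, bV x x = 2 * k)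
    (hindex₁ : ∃ x ∈ L, ¬(isInt4 x.1 ∧ isInt8 x.2))
    (hindex₂ : ∀ x ∈ L, ∀ y ∈ L, ¬(isInt4 x.1 ∧ isInt8 x.2) →
      ¬(isInt4 y.1 ∧ isInt8 y.2) → isInt4 (x - y).1 ∧ isInt8 (x - y).2)
    (hK : ∀ x ∈ L, x.2 = 0 → isInt4 x.1)
    (hE : ∀ x ∈ L, x.1 = 0 → isInt8 x.2) :
    (∀ d ∈ L, ¬(isInt4 d.1 ∧ isInt8 d.2) →
      ¬ isInt4 d.1 ∧ ¬ isInt8 d.2 ∧ ∃ k : ℤ, bK d.1 d.1 - bE d.2 d.2 = 2 * k) ∧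
    (∀ d ∈ L, ∀ d' ∈ L, ¬(isInt4 d.1 ∧ isInt8 d.2) → ¬(isInt4 d'.1 ∧ isInt8 d'.2) →
      ∃ k : ℤ, bK d.1 d.1 - bK d'.1 d'.1 = 2 * k) := by
  simp only [isInt4, isInt8, ← mem_integerLattice_iff] at hsub hK hE
  have hL : (integerLattice (Fin 4)).prod (integerLattice (Fin 8)) ≤ L := hsub
  refine ⟨fun d hd hn => ⟨fun h₁ => hn ⟨h₁, ?_⟩, fun h₂ => hn ⟨?_, h₂⟩, ?_⟩,
    fun d hd d' hd' hn hn' => ?_⟩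
  · exact mem_integerLattice_iff.mp
      (snd_mem_of_fst_mem hL hE hd (mem_integerLattice_iff.mpr h₁))
  · exact mem_integerLattice_iff.mp
      (fst_mem_of_snd_mem hL hK hd (mem_integerLattice_iff.mpr h₂))
  · exact exists_bK_self_sub_bE_self_eq_two_mul (hhalf d hd).2 (heven d hd)
  · exact exists_bK_self_sub_eq_two_mul (hhalf d hd).1 (hindex₂ d hd d' hd' hn hn').1

end Stmt4
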